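/- arXiv:2510.06891 — 7 statements merged into one kernel-verified Lean document; each statement's English description precedes it below -/
import Mathlib

section
/- Let N₁, N₂ be real symmetric positive semidefinite d×d matrices and set N₃ := N₁ + N₂. For i ∈ {1,3} let M_i be a real symmetric positive semidefinite matrix with M_i² = N_i. Then M₃ − M₁ is positive semidefinite and √(tr((M₃ − M₁)²)) ≤ tr(M₃ − M₁). -/
open Matrix in
/-- If `A, B` are positive semidefinite and `A² - B²` is positive
semidefinite, then so is `A - B`. -/
theorem Matrix.PosSemidef.sub_of_sq_sub_sq {n : Type*} [Fintype n] [DecidableEq n]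
    {A B : Matrix n n ℝ} (hA : A.PosSemidef) (hB : B.PosSemidef)
    (h : (A ^ 2 - B ^ 2).PosSemidef) : (A - B).PosSemidef := by
  have hD : (A - B).IsHermitian := hA.1.sub hB.1
  refine hD.posSemidef_iff_eigenvalues_nonneg.2 fun i => ?_
  set l := hD.eigenvalues i
  set v : n → ℝ := ⇑(hD.eigenvectorBasis i)
  have hDv : (A - B) *ᵥ v = l • v := hD.mulVec_eigenvectorBasis i
  have hvD : v ᵥ* (A - B) = l • v := by
    rw [← hDv, ← mulVec_transpose]
    congr 1
  have hv0 : 0 < v ⬝ᵥ v := by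
    have hne : v ≠ 0 := fun h0 =>
      hD.eigenvectorBasis.orthonormal.ne_zero i (by ext j; exact congrFun h0 j)
    simpa using dotProduct_star_self_pos_iff.2 hne
  have hAv : 0 ≤ v ⬝ᵥ A *ᵥ v := by simpa using hA.dotProduct_mulVec_nonneg v
  have hBv : 0 ≤ v ⬝ᵥ B *ᵥ v := by simpa using hB.dotProduct_mulVec_nonneg v
  have hdiff : v ⬝ᵥ A *ᵥ v - v ⬝ᵥ B *ᵥ v = l * (v ⬝ᵥ v) := by
    rw [← dotProduct_sub, ← sub_mulVec, hDv, dotProduct_smul, smul_eq_mul]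
  have hsum : 0 ≤ l * (v ⬝ᵥ A *ᵥ v + v ⬝ᵥ B *ᵥ v) := by
    have hfac : A ^ 2 - B ^ 2 = A * (A - B) + (A - B) * B := by noncomm_ring
    have hq : 0 ≤ v ⬝ᵥ (A ^ 2 - B ^ 2) *ᵥ v := by simpa using h.dotProduct_mulVec_nonneg v
    rw [hfac, add_mulVec, dotProduct_add, ← mulVec_mulVec, ← mulVec_mulVec, hDv,
      dotProduct_mulVec v (A - B), hvD, mulVec_smul, dotProduct_smul, smul_dotProduct,
      smul_eq_mul, smul_eq_mul, ← mul_add] at hq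
    exact hq
  change 0 ≤ l
  by_contra! hneg
  nlinarith [mul_neg_of_neg_of_pos hneg hv0]

/-- The squared Frobenius norm of a positive semidefinite matrix is at most its squared trace. -/
theorem Matrix.PosSemidef.trace_sq_le_sq_trace {n : Type*} [Fintype n] [DecidableEq n]
    {A : Matrix n n ℝ} (hA : A.PosSemidef) : (A ^ 2).trace ≤ A.trace ^ 2 := by
  rw [sq, sq, Matrix.trace, Matrix.trace, Finset.sum_mul_sum]
  refine Finset.sum_le_sum fun i _ => ?_
  rw [Matrix.diag_apply, Matrix.mul_apply]
  refine Finset.sum_le_sum fun j _ => ?_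
  have hdet := (hA.submatrix ![i, j]).det_nonneg
  rw [Matrix.det_fin_two] at hdet
  simpa using hdet


/-- If `N₁, N₂` are symmetric positive semidefinite, `N₃ = N₁ + N₂`,
and `M₁, M₃` are symmetric positive semidefinite square roots of `N₁` and `N₃`,
then `M₃ - M₁` is positive semidefinite and `√(tr((M₃ - M₁)²)) ≤ tr(M₃ - M₁)`. -/
theorem sqrt_trace_sq_le_trace_of_sqrt_psd
    (d : ℕ) (N₁ N₂ M₁ M₃ : Matrix (Fin d) (Fin d) ℝ)
    (hN₁ : N₁.PosSemidef) (hN₂ : N₂.PosSemidef)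
    (hM₁ : M₁.PosSemidef) (hM₃ : M₃.PosSemidef)
    (hsq₁ : M₁ ^ 2 = N₁) (hsq₃ : M₃ ^ 2 = N₁ + N₂) :
    (M₃ - M₁).PosSemidef ∧
      Real.sqrt (Matrix.trace ((M₃ - M₁) ^ 2)) ≤ Matrix.trace (M₃ - M₁) := by
  have hD : (M₃ - M₁).PosSemidef :=
    hM₃.sub_of_sq_sub_sq hM₁ (by rwa [hsq₃, hsq₁, add_sub_cancel_left])
  exact ⟨hD, Real.sqrt_le_iff.2 ⟨hD.trace_nonneg, hD.trace_sq_le_sq_trace⟩⟩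
end

section
/- Let g : [1,∞) → ℝ be measurable with ∫₁^∞ |g(t)| t^{−1} dt < ∞. Then there exists an increasing sequence (t_n)_{n∈ℕ} in [1,∞) such that t_n → ∞, t_{n+1}/t_n → 1 and g(t_n) → 0 as n → ∞. -/
open Filter MeasureTheory

/-- If `∫ |g t| / t` over `[a, a(1+ε)]` is less than `ε²`, then `|g|` is at most `ε(1+ε)`
somewhere on that interval. -/
theorem exists_abs_le_of_setIntegral_div_lt {g : ℝ → ℝ} {a ε : ℝ} (ha : 0 < a) (hε : 0 < ε)
    (hint : IntegrableOn (fun t => |g t| / t) (Set.Icc a (a * (1 + ε))))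
    (hlt : ∫ t in Set.Icc a (a * (1 + ε)), |g t| / t < ε ^ 2) :
    ∃ y ∈ Set.Icc a (a * (1 + ε)), |g y| ≤ ε * (1 + ε) := by
  by_contra! hlarge
  have hle : ∀ t ∈ Set.Icc a (a * (1 + ε)), ε / a ≤ |g t| / t := by
    intro t ht
    rw [div_le_div_iff₀ ha (ha.trans_le ht.1)]
    calc ε * t ≤ ε * (a * (1 + ε)) := by gcongr; exact ht.2
      _ = ε * (1 + ε) * a := by ring
      _ ≤ |g t| * a := by gcongr; exact (hlarge t ht).le
  have hconst := setIntegral_mono_on (μ := volume) (integrableOn_const (by simp)) hint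
    measurableSet_Icc hle
  have hvol : a * (1 + ε) - a = a * ε := by ring
  rw [setIntegral_const, measureReal_def, Real.volume_Icc, hvol,
    ENNReal.toReal_ofReal (by positivity), smul_eq_mul] at hconst
  have hsq : a * ε * (ε / a) = ε ^ 2 := by field_simp
  linarith

/-- If `g : [1,∞) → ℝ` is measurable with `∫₁^∞ |g(t)| t⁻¹ dt < ∞`,
then there is an increasing sequence `t_n → ∞` with `t_{n+1}/t_n → 1` and `g(t_n) → 0`. -/
theorem exists_seq_tendsto_zero_of_integrable_div
    (g : ℝ → ℝ) (hg : Measurable g)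
    (hint : ∫⁻ t in Set.Ici (1 : ℝ), ENNReal.ofReal (|g t| / t) < ⊤) :
    ∃ t : ℕ → ℝ, StrictMono t ∧ (∀ n, 1 ≤ t n) ∧
      Tendsto t atTop atTop ∧
      Tendsto (fun n => t (n + 1) / t n) atTop (nhds 1) ∧
      Tendsto (fun n => g (t n)) atTop (nhds 0) := by
  have hnonneg : ∀ t : ℝ, 1 ≤ t → 0 ≤ |g t| / t := fun t ht => by positivity
  have hI : IntegrableOn (fun t => |g t| / t) (Set.Ici 1) := by
    refine ⟨(by fun_prop : Measurable fun t => |g t| / t).aestronglyMeasurable, ?_⟩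
    rwa [hasFiniteIntegral_iff_ofReal
      (ae_restrict_of_forall_mem measurableSet_Ici hnonneg)]
  set F : ℝ → ℝ := fun x => ∫ t in Set.Ioi x, |g t| / t
  have hF0 : Tendsto F atTop (nhds 0) := tendsto_integral_Ioi_zero tendsto_id
  set ε : ℝ → ℝ := fun x => √(F x) + 1 / x with hεdef
  have hε0 : Tendsto ε atTop (nhds 0) := by
    simpa [hεdef] using hF0.sqrt.add tendsto_inv_atTop_zero
  have hstep : ∀ x, 1 ≤ x →
      ∃ y ∈ Set.Icc (x + 1) ((x + 1) * (1 + ε x)), |g y| ≤ ε x * (1 + ε x) := by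
    intro x hx
    have hsub : Set.Icc (x + 1) ((x + 1) * (1 + ε x)) ⊆ Set.Ioi x := fun t ht =>
      (lt_add_one x).trans_le ht.1
    have hIx : IntegrableOn (fun t => |g t| / t) (Set.Ioi x) :=
      hI.mono_set fun t ht => hx.trans ht.le
    have hxnonneg : ∀ t ∈ Set.Ioi x, 0 ≤ |g t| / t := fun t ht => hnonneg t (hx.trans ht.le)
    have hFx : 0 ≤ F x := setIntegral_nonneg measurableSet_Ioi hxnonneg
    have hinv : 0 < 1 / x := by positivity
    refine exists_abs_le_of_setIntegral_div_lt (by positivity) (by positivity)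
      (hIx.mono_set hsub) ?_
    calc _ ≤ F x := setIntegral_mono_set hIx
          (ae_restrict_of_forall_mem measurableSet_Ioi hxnonneg) hsub.eventuallyLE
      _ = √(F x) ^ 2 := (Real.sq_sqrt hFx).symm
      _ < ε x ^ 2 := pow_lt_pow_left₀ (lt_add_of_pos_right _ hinv) (Real.sqrt_nonneg _) two_ne_zero
  choose! f hfmem hfsmall using hstep
  set t : ℕ → ℝ := fun n => f^[n] 1 with htdef
  have hsucc : ∀ n, t (n + 1) = f (t n) := fun n => Function.iterate_succ_apply' f n 1
  have hge : ∀ n : ℕ, (n : ℝ) + 1 ≤ t n := by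
    intro n
    induction n with
    | zero => simp [htdef]
    | succ n ih =>
      have := (hfmem (t n) (by linarith [n.cast_nonneg (α := ℝ)])).1
      rw [hsucc]
      push_cast
      linarith
  have hone : ∀ n, 1 ≤ t n := fun n => by linarith [hge n, n.cast_nonneg (α := ℝ)]
  have htop : Tendsto t atTop atTop :=
    tendsto_atTop_mono (fun n => (lt_add_one (n : ℝ)).le.trans (hge n))
      tendsto_natCast_atTop_atTop
  have hεt : Tendsto (fun n => ε (t n)) atTop (nhds 0) := hε0.comp htop
  refine ⟨t, strictMono_nat_of_lt_succ fun n => ?_, hone, htop, ?_, ?_⟩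
  · rw [hsucc]
    linarith [(hfmem (t n) (hone n)).1]
  · have hupper : Tendsto (fun n => (1 + (t n)⁻¹) * (1 + ε (t n))) atTop (nhds 1) := by
      simpa using ((tendsto_inv_atTop_zero.comp htop).const_add 1).mul (hεt.const_add 1)
    refine tendsto_of_tendsto_of_tendsto_of_le_of_le tendsto_const_nhds hupper
      (fun n => ?_) fun n => ?_
    · have hpos : 0 < t n := zero_lt_one.trans_le (hone n)
      simp only [hsucc]
      rw [one_le_div hpos]
      linarith [(hfmem (t n) (hone n)).1]
    · have hpos : 0 < t n := zero_lt_one.trans_le (hone n)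
      simp only [hsucc]
      rw [div_le_iff₀ hpos]
      refine (hfmem (t n) (hone n)).2.trans_eq ?_
      field_simp
  · rw [← tendsto_add_atTop_iff_nat 1]
    refine squeeze_zero_norm (a := fun n => ε (t n) * (1 + ε (t n))) (fun n => ?_) ?_
    · rw [hsucc]
      exact hfsmall (t n) (hone n)
    · simpa using hεt.mul (hεt.const_add 1)
end

section
/- Let ξ₁ and ξ₂ be independent real-valued random variables with E[(ξ₁ − ξ₂)²] < ∞. Then E[ξ₁²] < ∞. -/
open MeasureTheory ProbabilityTheory

/-- If `ξ₁` and `ξ₂` are independent real random variables with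
`E[(ξ₁ - ξ₂)²] < ∞`, then `E[ξ₁²] < ∞`. -/
theorem integrable_sq_of_integrable_sub_sq
    {Ω : Type*} [MeasurableSpace Ω] (μ : Measure Ω) [IsProbabilityMeasure μ]
    (ξ₁ ξ₂ : Ω → ℝ) (h₁ : Measurable ξ₁) (h₂ : Measurable ξ₂)
    (hindep : IndepFun ξ₁ ξ₂ μ)
    (hint : Integrable (fun ω => (ξ₁ ω - ξ₂ ω) ^ 2) μ) :
    Integrable (fun ω => ξ₁ ω ^ 2) μ := by
  have hprod : Integrable (fun p : ℝ × ℝ => (p.1 - p.2) ^ 2) ((μ.map ξ₁).prod (μ.map ξ₂)) := by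
    rw [← (indepFun_iff_map_prod_eq_prod_map_map h₁.aemeasurable h₂.aemeasurable).mp hindep,
      integrable_map_measure (by fun_prop) (by fun_prop)]
    exact hint
  have : IsProbabilityMeasure (μ.map ξ₂) := Measure.isProbabilityMeasure_map h₂.aemeasurable
  obtain ⟨y, hy⟩ := hprod.prod_left_ae.exists
  have hy' : Integrable (fun ω => (ξ₁ ω - y) ^ 2) μ := hy.comp_measurable h₁
  have hmem : MemLp (fun ω => ξ₁ ω - y) 2 μ :=
    (memLp_two_iff_integrable_sq (by fun_prop)).mpr hy'
  simpa using (hmem.add (memLp_const y)).integrable_sq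
end

section
/- Let ξ₁, ξ₂, ζ₁, ζ₂ be real-valued random variables such that ξ₁ is independent of ξ₂ and ζ₁ is independent of ζ₂. Then d_K(ξ₁ + ξ₂, ζ₁ + ζ₂) ≤ d_K(ξ₁, ζ₁) + d_K(ξ₂, ζ₂). -/
open MeasureTheory ProbabilityTheory

/-- The Kolmogorov distance between (the laws of) two real random variables. -/
noncomputable def kolDist {Ω : Type*} [MeasurableSpace Ω] (μ : Measure Ω)
    (ξ ζ : Ω → ℝ) : ℝ :=
  ⨆ x : ℝ, |(μ {ω | ξ ω ≤ x}).toReal - (μ {ω | ζ ω ≤ x}).toReal|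

/-- The distribution function of a convolution, as an integral against the first factor. -/
lemma conv_real_Iic (α ν : Measure ℝ) [IsProbabilityMeasure α] [IsProbabilityMeasure ν] (x : ℝ) :
    (α ∗ ν).real (Set.Iic x) = ∫ y, ν.real (Set.Iic (x - y)) ∂α := by
  have hs : MeasurableSet ((fun p : ℝ × ℝ => p.1 + p.2) ⁻¹' Set.Iic x) :=
    measurable_add measurableSet_Iic
  have h : ∀ y : ℝ, Prod.mk y ⁻¹' ((fun p : ℝ × ℝ => p.1 + p.2) ⁻¹' Set.Iic x)
      = Set.Iic (x - y) := fun y => by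
    ext z
    simp [le_sub_iff_add_le']
  have hm : Measurable fun y => ν (Set.Iic (x - y)) := by
    simpa only [h] using measurable_measure_prodMk_left (ν := ν) hs
  simp only [measureReal_def]
  rw [integral_toReal hm.aemeasurable (ae_of_all _ fun y => measure_lt_top _ _), Measure.conv,
    Measure.map_apply measurable_add measurableSet_Iic, Measure.prod_apply hs]
  simp only [h]

lemma integrable_real_Iic_sub (α ν : Measure ℝ) [IsProbabilityMeasure α] [IsProbabilityMeasure ν]
    (x : ℝ) : Integrable (fun y => ν.real (Set.Iic (x - y))) α := by
  have hanti : Antitone fun y => ν.real (Set.Iic (x - y)) := fun a b hab =>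
    measureReal_mono (Set.Iic_subset_Iic.2 (by linarith))
  refine Integrable.of_bound hanti.measurable.aestronglyMeasurable 1 (ae_of_all _ fun y => ?_)
  rw [Real.norm_of_nonneg measureReal_nonneg]
  exact measureReal_le_one

/-- Convolution with a probability measure does not increase the Kolmogorov distance. -/
lemma abs_conv_real_Iic_sub_le (α ν ν' : Measure ℝ) [IsProbabilityMeasure α]
    [IsProbabilityMeasure ν] [IsProbabilityMeasure ν'] {C : ℝ}
    (hC : ∀ x, |ν.real (Set.Iic x) - ν'.real (Set.Iic x)| ≤ C) (x : ℝ) :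
    |(α ∗ ν).real (Set.Iic x) - (α ∗ ν').real (Set.Iic x)| ≤ C := by
  rw [conv_real_Iic, conv_real_Iic,
    ← integral_sub (integrable_real_Iic_sub α ν x) (integrable_real_Iic_sub α ν' x)]
  simpa using norm_integral_le_of_norm_le_const (μ := α)
    (f := fun y => ν.real (Set.Iic (x - y)) - ν'.real (Set.Iic (x - y)))
    (ae_of_all _ fun y => hC (x - y))

lemma abs_map_real_Iic_sub_le_kolDist {Ω : Type*} [MeasurableSpace Ω] (μ : Measure Ω)
    [IsProbabilityMeasure μ] {ξ ζ : Ω → ℝ} (hξ : Measurable ξ) (hζ : Measurable ζ) (x : ℝ) :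
    |(μ.map ξ).real (Set.Iic x) - (μ.map ζ).real (Set.Iic x)| ≤ kolDist μ ξ ζ := by
  rw [map_measureReal_apply hξ measurableSet_Iic, map_measureReal_apply hζ measurableSet_Iic]
  refine le_ciSup (f := fun x : ℝ => |μ.real {ω | ξ ω ≤ x} - μ.real {ω | ζ ω ≤ x}|)
    ⟨1, ?_⟩ x
  rintro _ ⟨y, rfl⟩
  exact abs_sub_le_of_nonneg_of_le measureReal_nonneg measureReal_le_one
    measureReal_nonneg measureReal_le_one

lemma real_add_le_eq_conv {Ω : Type*} [MeasurableSpace Ω] (μ : Measure Ω)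
    [IsProbabilityMeasure μ] {X Y : Ω → ℝ} (hX : Measurable X) (hY : Measurable Y)
    (h : IndepFun X Y μ) (x : ℝ) :
    (μ {ω | X ω + Y ω ≤ x}).toReal = (μ.map X ∗ μ.map Y).real (Set.Iic x) := by
  rw [← h.map_add_eq_map_conv_map hX hY,
    map_measureReal_apply (hX.add hY) measurableSet_Iic]
  rfl

/-- If `ξ₁ ⟂ ξ₂` and `ζ₁ ⟂ ζ₂`, then
`d_K(ξ₁+ξ₂, ζ₁+ζ₂) ≤ d_K(ξ₁,ζ₁) + d_K(ξ₂,ζ₂)`. -/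
theorem kolDist_add_le
    {Ω : Type*} [MeasurableSpace Ω] (μ : Measure Ω) [IsProbabilityMeasure μ]
    (ξ₁ ξ₂ ζ₁ ζ₂ : Ω → ℝ)
    (hξ₁ : Measurable ξ₁) (hξ₂ : Measurable ξ₂)
    (hζ₁ : Measurable ζ₁) (hζ₂ : Measurable ζ₂)
    (hξ : IndepFun ξ₁ ξ₂ μ) (hζ : IndepFun ζ₁ ζ₂ μ) :
    kolDist μ (fun ω => ξ₁ ω + ξ₂ ω) (fun ω => ζ₁ ω + ζ₂ ω) ≤
      kolDist μ ξ₁ ζ₁ + kolDist μ ξ₂ ζ₂ := by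
  have := Measure.isProbabilityMeasure_map (μ := μ) hξ₁.aemeasurable
  have := Measure.isProbabilityMeasure_map (μ := μ) hξ₂.aemeasurable
  have := Measure.isProbabilityMeasure_map (μ := μ) hζ₁.aemeasurable
  have := Measure.isProbabilityMeasure_map (μ := μ) hζ₂.aemeasurable
  refine ciSup_le fun x => ?_
  rw [real_add_le_eq_conv μ hξ₁ hξ₂ hξ, real_add_le_eq_conv μ hζ₁ hζ₂ hζ]
  have h₂ := abs_conv_real_Iic_sub_le (μ.map ξ₁) _ _
    (abs_map_real_Iic_sub_le_kolDist μ hξ₂ hζ₂) x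
  have h₁ := abs_conv_real_Iic_sub_le (μ.map ζ₂) _ _
    (abs_map_real_Iic_sub_le_kolDist μ hξ₁ hζ₁) x
  rw [Measure.conv_comm (μ.map ζ₂), Measure.conv_comm (μ.map ζ₂)] at h₁
  exact (abs_sub_le _ _ _).trans ((add_le_add h₂ h₁).trans_eq (add_comm _ _))
end

section
/- Let ζ be a non-degenerate real-valued random variable (its law is not a Dirac mass), let (ξ_t)_{t≥1} be a family of real-valued random variables, and let f₁, f₂ : [1,∞) → (0,∞) be measurable. If d_K(f₁(t)·ξ_t, ζ) → 0 and d_K(f₂(t)·ξ_t, ζ) → 0 as t → ∞, then f₁(t)/f₂(t) → 1 as t → ∞. -/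
open MeasureTheory Filter

section

open ProbabilityTheory

variable {Ω : Type*} [MeasurableSpace Ω] {μ : Measure Ω} [IsProbabilityMeasure μ]

lemma abs_sub_le_kolDist (ξ ζ : Ω → ℝ) (x : ℝ) :
    |(μ {ω | ξ ω ≤ x}).toReal - (μ {ω | ζ ω ≤ x}).toReal| ≤ kolDist μ ξ ζ := by
  refine le_ciSup (f := fun x : ℝ => |(μ {ω | ξ ω ≤ x}).toReal - (μ {ω | ζ ω ≤ x}).toReal|)
    ⟨1, ?_⟩ x
  rintro _ ⟨y, rfl⟩
  have h₁ : (μ {ω | ξ ω ≤ y}).toReal ≤ 1 := measureReal_le_one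
  have h₂ : (μ {ω | ζ ω ≤ y}).toReal ≤ 1 := measureReal_le_one
  have h₃ : 0 ≤ (μ {ω | ξ ω ≤ y}).toReal := ENNReal.toReal_nonneg
  have h₄ : 0 ≤ (μ {ω | ζ ω ≤ y}).toReal := ENNReal.toReal_nonneg
  exact abs_le.2 ⟨by linarith, by linarith⟩

lemma cdf_map_eq {ζ : Ω → ℝ} (hζ : Measurable ζ) (x : ℝ) :
    cdf (μ.map ζ) x = (μ {ω | ζ ω ≤ x}).toReal := by
  have := Measure.isProbabilityMeasure_map (μ := μ) hζ.aemeasurable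
  rw [cdf_eq_real, map_measureReal_apply hζ measurableSet_Iic]
  rfl

/-- If two rescalings of the same variable are close to `ζ`, then the distribution function of `ζ`
is almost invariant under multiplication by the ratio of the scaling factors. -/
lemma abs_cdf_mul_sub_cdf_le {ζ : Ω → ℝ} (hζ : Measurable ζ) (ξ : Ω → ℝ) {b c : ℝ}
    (hb : 0 < b) (hc : 0 < c) (x : ℝ) :
    |cdf (μ.map ζ) (b / c * x) - cdf (μ.map ζ) x| ≤
      kolDist μ (fun ω => b * ξ ω) ζ + kolDist μ (fun ω => c * ξ ω) ζ := by
  have h₁ := abs_sub_le_kolDist (μ := μ) (fun ω => b * ξ ω) ζ (b / c * x)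
  have h₂ := abs_sub_le_kolDist (μ := μ) (fun ω => c * ξ ω) ζ x
  have hset : {ω | b * ξ ω ≤ b / c * x} = {ω | c * ξ ω ≤ x} := by
    ext ω
    have : b / c * x = b * (x / c) := by ring
    rw [Set.mem_ofPred_eq, Set.mem_ofPred_eq, this, mul_le_mul_iff_right₀ hb, le_div_iff₀' hc]
  rw [hset] at h₁
  rw [cdf_map_eq hζ, cdf_map_eq hζ]
  rw [abs_le] at *
  constructor <;> linarith [h₁.1, h₁.2, h₂.1, h₂.2]

/-- A function invariant under multiplication by `a > 1` at every nonzero point equals its limit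
along each ray. -/
lemma eq_of_mul_invariant_of_tendsto {F : ℝ → ℝ} {a : ℝ} (ha : 1 < a)
    (hF : ∀ x ≠ 0, F (a * x) = F x) {l : Filter ℝ} {L x : ℝ} (hx : x ≠ 0)
    (hl : Tendsto (fun n : ℕ => a ^ n * x) atTop l) (hL : Tendsto F l (nhds L)) : F x = L := by
  have hconst : ∀ n : ℕ, F (a ^ n * x) = F x := by
    intro n
    induction n with
    | zero => simp
    | succ n ih =>
      rw [pow_succ', mul_assoc, hF _ (mul_ne_zero (pow_ne_zero _ (by linarith)) hx), ih]
  have h := hL.comp hl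
  simp only [Function.comp_def, hconst] at h
  exact tendsto_nhds_unique tendsto_const_nhds h

lemma measure_eq_zero_eq_one_of_cdf_mul_invariant {ζ : Ω → ℝ} (hζ : Measurable ζ) {a : ℝ}
    (ha : 1 < a) (hF : ∀ x ≠ 0, cdf (μ.map ζ) (a * x) = cdf (μ.map ζ) x) :
    μ {ω | ζ ω = 0} = 1 := by
  have hpow := tendsto_pow_atTop_atTop_of_one_lt ha
  have hpos : ∀ x > 0, ∀ᵐ ω ∂μ, ζ ω ≤ x := by
    intro x hx
    have h := eq_of_mul_invariant_of_tendsto ha hF hx.ne' (hpow.atTop_mul_const hx)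
      (tendsto_cdf_atTop _)
    rw [cdf_map_eq hζ] at h
    rw [ENNReal.toReal_eq_one_iff] at h
    exact (mem_ae_iff_prob_eq_one (measurableSet_le hζ measurable_const)).2 h
  have hneg : ∀ x < 0, ∀ᵐ ω ∂μ, x < ζ ω := by
    intro x hx
    have h := eq_of_mul_invariant_of_tendsto ha hF hx.ne (hpow.atTop_mul_const_of_neg hx)
      (tendsto_cdf_atBot _)
    rw [cdf_map_eq hζ, ENNReal.toReal_eq_zero_iff] at h
    simpa [ae_iff] using h.resolve_right (measure_ne_top _ _)
  have hae : ∀ᵐ ω ∂μ, ζ ω = 0 := by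
    have h₁ : ∀ᵐ ω ∂μ, ∀ n : ℕ, ζ ω ≤ 1 / ((n : ℝ) + 1) :=
      ae_all_iff.2 fun n => hpos _ Nat.one_div_pos_of_nat
    have h₂ : ∀ᵐ ω ∂μ, ∀ n : ℕ, -(1 / ((n : ℝ) + 1)) < ζ ω :=
      ae_all_iff.2 fun n => hneg _ (neg_lt_zero.2 Nat.one_div_pos_of_nat)
    filter_upwards [h₁, h₂] with ω hle hge
    have hlim := tendsto_one_div_add_atTop_nhds_zero_nat (𝕜 := ℝ)
    refine le_antisymm (ge_of_tendsto' hlim hle) ?_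
    simpa using le_of_tendsto' hlim.neg fun n => (hge n).le
  exact (mem_ae_iff_prob_eq_one (hζ (measurableSet_singleton 0))).1 hae

/-- One-sided bound on the ratio of two scaling functions. -/
lemma eventually_div_lt_of_tendsto_kolDist {ζ : Ω → ℝ} (hζ : Measurable ζ)
    (hζ_ne : μ {ω | ζ ω = 0} ≠ 1) {ι : Type*} {l : Filter ι} {ξ : ι → Ω → ℝ} {f g : ι → ℝ}
    (hf : ∀ᶠ t in l, 0 < f t) (hg : ∀ᶠ t in l, 0 < g t)
    (hfξ : Tendsto (fun t => kolDist μ (fun ω => f t * ξ t ω) ζ) l (nhds 0))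
    (hgξ : Tendsto (fun t => kolDist μ (fun ω => g t * ξ t ω) ζ) l (nhds 0))
    {a : ℝ} (ha : 1 < a) : ∀ᶠ t in l, f t / g t < a := by
  obtain ⟨x, hx, hne⟩ : ∃ x ≠ 0, cdf (μ.map ζ) (a * x) ≠ cdf (μ.map ζ) x := by
    by_contra! h
    exact hζ_ne (measure_eq_zero_eq_one_of_cdf_mul_invariant hζ ha h)
  have hlim := hfξ.add hgξ
  rw [add_zero] at hlim
  filter_upwards [hf, hg, hlim.eventually_lt_const (abs_pos.2 (sub_ne_zero.2 hne))]
    with t hft hgt hlt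
  by_contra! hat
  refine hlt.not_ge (le_trans ?_ (abs_cdf_mul_sub_cdf_le hζ (ξ t) hft hgt x))
  have hmono := monotone_cdf (μ.map ζ)
  rcases hx.lt_or_gt with hx | hx
  · have h₁ := hmono (show a * x ≤ x by nlinarith)
    have h₂ := hmono (mul_le_mul_of_nonpos_right hat hx.le)
    rw [abs_of_nonpos (by linarith), abs_of_nonpos (by linarith)]
    linarith
  · have h₁ := hmono (show x ≤ a * x by nlinarith)
    have h₂ := hmono (mul_le_mul_of_nonneg_right hat hx.le)
    rw [abs_of_nonneg (by linarith), abs_of_nonneg (by linarith)]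
    linarith

end

/-- **asymptotic uniqueness of scaling functions.** If `ζ` is
non-degenerate and `d_K(fᵢ(t)·ξ_t, ζ) → 0` for `i = 1, 2` with `f₁, f₂ > 0`,
then `f₁(t)/f₂(t) → 1` as `t → ∞`. -/
theorem scaling_asymptotically_unique
    {Ω : Type*} [MeasurableSpace Ω] (μ : Measure Ω) [IsProbabilityMeasure μ]
    (ζ : Ω → ℝ) (hζ_meas : Measurable ζ)
    (hζ_nondeg : ∀ c : ℝ, μ {ω | ζ ω = c} ≠ 1)
    (ξ : ℝ → Ω → ℝ) (hξ_meas : ∀ t, Measurable (ξ t))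
    (f₁ f₂ : ℝ → ℝ) (hf₁_meas : Measurable f₁) (hf₂_meas : Measurable f₂)
    (hf₁_pos : ∀ t ≥ (1 : ℝ), 0 < f₁ t) (hf₂_pos : ∀ t ≥ (1 : ℝ), 0 < f₂ t)
    (h₁ : Tendsto (fun t => kolDist μ (fun ω => f₁ t * ξ t ω) ζ) atTop (nhds 0))
    (h₂ : Tendsto (fun t => kolDist μ (fun ω => f₂ t * ξ t ω) ζ) atTop (nhds 0)) :
    Tendsto (fun t => f₁ t / f₂ t) atTop (nhds 1) := by
  have hf₁ : ∀ᶠ t in atTop, 0 < f₁ t := (eventually_ge_atTop 1).mono hf₁_pos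
  have hf₂ : ∀ᶠ t in atTop, 0 < f₂ t := (eventually_ge_atTop 1).mono hf₂_pos
  refine tendsto_order.2 ⟨fun b hb => ?_, fun a ha =>
    eventually_div_lt_of_tendsto_kolDist hζ_meas (hζ_nondeg 0) hf₁ hf₂ h₁ h₂ ha⟩
  rcases le_or_gt b 0 with hb₀ | hb₀
  · filter_upwards [hf₁, hf₂] with t ht₁ ht₂
    exact hb₀.trans_lt (div_pos ht₁ ht₂)
  · filter_upwards [hf₁, hf₂, eventually_div_lt_of_tendsto_kolDist hζ_meas (hζ_nondeg 0)
      hf₂ hf₁ h₂ h₁ ((one_lt_inv₀ hb₀).2 hb)] with t ht₁ ht₂ hlt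
    rwa [← inv_div, inv_lt_inv₀ (div_pos ht₁ ht₂) hb₀] at hlt
end

section
/- Let ξ and ζ be real-valued random variables with E[|ξ|] < ∞ and E[|ζ|] < ∞, and let F(x) := P(ξ ≤ x) and G(x) := P(ζ ≤ x) be their distribution functions. Then for every η ∈ ℝ: E[e^{iηξ}] − E[e^{iηζ}] = −iη ∫_ℝ (F(y) − G(y)) e^{iηy} dy. -/
open MeasureTheory Complex

/-- The difference of the indicators of `[a, ∞)` and `[b, ∞)`. -/
noncomputable def stepDiff (a b y : ℝ) : ℝ :=
  (Set.Ici a).indicator 1 y - (Set.Ici b).indicator 1 y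

lemma stepDiff_mul_eq (a b : ℝ) (f : ℝ → ℂ) :
    (fun y => (stepDiff a b y : ℂ) * f y)
      = fun y => (Set.Ico a b).indicator f y - (Set.Ico b a).indicator f y := by
  funext y
  simp only [stepDiff, Set.indicator_apply, Set.mem_Ici, Set.mem_Ico, Pi.one_apply]
  by_cases h₁ : a ≤ y <;> by_cases h₂ : b ≤ y <;> simp [h₁, h₂, not_lt.2, lt_of_not_ge]

lemma integrable_indicator_Ico {f : ℝ → ℂ} (hf : Continuous f) (a b : ℝ) :
    Integrable ((Set.Ico a b).indicator f) :=
  (integrable_indicator_iff measurableSet_Ico).2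
    ((hf.integrableOn_Icc (a := a) (b := b)).mono_set Set.Ico_subset_Icc_self)

lemma integrable_stepDiff_mul {f : ℝ → ℂ} (hf : Continuous f) (a b : ℝ) :
    Integrable fun y => (stepDiff a b y : ℂ) * f y := by
  rw [stepDiff_mul_eq]
  exact (integrable_indicator_Ico hf a b).sub (integrable_indicator_Ico hf b a)

lemma integral_stepDiff_mul {f : ℝ → ℂ} (hf : Continuous f) (a b : ℝ) :
    ∫ y, (stepDiff a b y : ℂ) * f y = ∫ y in a..b, f y := by
  rw [stepDiff_mul_eq, integral_sub (integrable_indicator_Ico hf a b)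
    (integrable_indicator_Ico hf b a), integral_indicator measurableSet_Ico,
    integral_indicator measurableSet_Ico, integral_Ico_eq_integral_Ioc,
    integral_Ico_eq_integral_Ioc, intervalIntegral]

lemma norm_stepDiff (a b y : ℝ) :
    ‖stepDiff a b y‖ = (Set.Ico (min a b) (max a b)).indicator 1 y := by
  simp only [stepDiff, Set.indicator_apply, Set.mem_Ici, Set.mem_Ico, Pi.one_apply,
    min_le_iff, ← not_le]
  by_cases h₁ : a ≤ y <;> by_cases h₂ : b ≤ y <;> simp [h₁, h₂]

lemma integral_norm_stepDiff (a b : ℝ) : ∫ y, ‖stepDiff a b y‖ = |a - b| := by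
  simp_rw [norm_stepDiff]
  rw [integral_indicator_one measurableSet_Ico, Real.volume_real_Ico_of_le min_le_max,
    max_sub_min_eq_abs']

lemma norm_exp_I_mul_mul (η y : ℝ) : ‖exp (I * η * y)‖ = 1 := by
  rw [show I * η * y = ((η * y : ℝ) : ℂ) * I by push_cast; ring, norm_exp_ofReal_mul_I]

lemma continuous_exp_I_mul_mul (η : ℝ) : Continuous fun y : ℝ => exp (I * η * y) := by
  fun_prop

lemma mul_intervalIntegral_exp_I_mul_mul (η a b : ℝ) :
    I * η * ∫ y in a..b, exp (I * η * y) = exp (I * η * b) - exp (I * η * a) := by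
  rw [← intervalIntegral.integral_const_mul]
  refine intervalIntegral.integral_eq_sub_of_hasDerivAt (f := fun y : ℝ => exp (I * η * y))
    (fun y _ => ?_) (Continuous.intervalIntegrable (by fun_prop) _ _)
  have h : HasDerivAt (fun y : ℝ => I * η * (y : ℂ)) (I * η * 1) y :=
    (ofRealCLM.hasDerivAt (x := y)).const_mul (I * (η : ℂ))
  simpa [mul_comm, mul_left_comm] using h.cexp

section Probability

variable {Ω : Type*} [MeasurableSpace Ω] {μ : Measure Ω} {ξ ζ : Ω → ℝ}

lemma measurable_stepDiff (hξ : Measurable ξ) (hζ : Measurable ζ) :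
    Measurable fun p : Ω × ℝ => stepDiff (ξ p.1) (ζ p.1) p.2 := by
  simp only [stepDiff, Set.indicator_apply, Set.mem_Ici, Pi.one_apply]
  exact (Measurable.ite (measurableSet_le (hξ.comp measurable_fst) measurable_snd)
    measurable_const measurable_const).sub
    (Measurable.ite (measurableSet_le (hζ.comp measurable_fst) measurable_snd)
    measurable_const measurable_const)

lemma integrable_prod_stepDiff_mul_exp [SFinite μ] (hξ : Measurable ξ) (hζ : Measurable ζ)
    (hξi : Integrable ξ μ) (hζi : Integrable ζ μ) (η : ℝ) :
    Integrable (fun p : Ω × ℝ => (stepDiff (ξ p.1) (ζ p.1) p.2 : ℂ) * exp (I * η * p.2))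
      (μ.prod volume) := by
  have hm : Measurable
      fun p : Ω × ℝ => (stepDiff (ξ p.1) (ζ p.1) p.2 : ℂ) * exp (I * η * p.2) := by
    have := measurable_stepDiff hξ hζ
    fun_prop
  rw [integrable_prod_iff hm.aestronglyMeasurable]
  constructor
  · filter_upwards with ω
    exact integrable_stepDiff_mul (continuous_exp_I_mul_mul η) (ξ ω) (ζ ω)
  · simp only [norm_mul, norm_exp_I_mul_mul, mul_one, norm_real, integral_norm_stepDiff]
    exact (hξi.sub hζi).abs

lemma integral_stepDiff [IsFiniteMeasure μ] (hξ : Measurable ξ) (hζ : Measurable ζ) (y : ℝ) :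
    ∫ ω, stepDiff (ξ ω) (ζ ω) y ∂μ = μ.real {ω | ξ ω ≤ y} - μ.real {ω | ζ ω ≤ y} := by
  have hind (χ : Ω → ℝ) : (fun ω => (Set.Ici (χ ω)).indicator (1 : ℝ → ℝ) y)
      = {ω | χ ω ≤ y}.indicator 1 := by
    ext ω; simp [Set.indicator_apply]
  have h_integrable {χ : Ω → ℝ} (hχ : Measurable χ) :
      Integrable (fun ω => (Set.Ici (χ ω)).indicator (1 : ℝ → ℝ) y) μ := by
    rw [hind]
    exact (integrable_const (1 : ℝ)).indicator (measurableSet_le hχ measurable_const)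
  simp only [stepDiff]
  rw [integral_sub (h_integrable hξ) (h_integrable hζ), hind, hind,
    integral_indicator_one (measurableSet_le hξ measurable_const),
    integral_indicator_one (measurableSet_le hζ measurable_const)]

lemma integrable_exp_I_mul_mul [IsFiniteMeasure μ] (hξ : Measurable ξ) (η : ℝ) :
    Integrable (fun ω => exp (I * η * ξ ω)) μ :=
  .of_bound ((continuous_exp_I_mul_mul η).measurable.comp hξ).aestronglyMeasurable 1
    (.of_forall fun ω => (norm_exp_I_mul_mul η (ξ ω)).le)

end Probability

/-- For integrable real random variables `ξ, ζ` with distribution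
functions `F, G`, and any `η ∈ ℝ`:
`E[e^{iηξ}] − E[e^{iηζ}] = −iη ∫_ℝ (F(y) − G(y)) e^{iηy} dy`. -/
theorem charFun_sub_eq_integral_cdf_sub
    {Ω : Type*} [MeasurableSpace Ω] (μ : Measure Ω) [IsProbabilityMeasure μ]
    (ξ ζ : Ω → ℝ) (hξ_meas : Measurable ξ) (hζ_meas : Measurable ζ)
    (hξ_int : Integrable ξ μ) (hζ_int : Integrable ζ μ) :
    ∀ η : ℝ,
      (∫ ω, Complex.exp (Complex.I * η * ξ ω) ∂μ)
          - (∫ ω, Complex.exp (Complex.I * η * ζ ω) ∂μ)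
        = -Complex.I * η *
            ∫ y : ℝ,
              (((μ {ω | ξ ω ≤ y}).toReal - (μ {ω | ζ ω ≤ y}).toReal : ℝ) : ℂ) *
                Complex.exp (Complex.I * η * y) := by
  intro η
  have hcdf (y : ℝ) :
      (((μ {ω | ξ ω ≤ y}).toReal - (μ {ω | ζ ω ≤ y}).toReal : ℝ) : ℂ) * exp (I * η * y)
        = ∫ ω, (stepDiff (ξ ω) (ζ ω) y : ℂ) * exp (I * η * y) ∂μ := by
    rw [integral_mul_const, integral_complex_ofReal, integral_stepDiff hξ_meas hζ_meas]
    rfl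
  simp_rw [hcdf]
  rw [← integral_integral_swap
    (integrable_prod_stepDiff_mul_exp hξ_meas hζ_meas hξ_int hζ_int η),
    ← integral_sub (integrable_exp_I_mul_mul hξ_meas η) (integrable_exp_I_mul_mul hζ_meas η),
    ← integral_const_mul]
  congr 1 with ω
  rw [integral_stepDiff_mul (continuous_exp_I_mul_mul η), neg_mul, neg_mul,
    mul_intervalIntegral_exp_I_mul_mul, neg_sub]
end

section
/- Let d ≥ 2 and let ξ be uniformly distributed on the unit circle C = {x ∈ ℝ^d : x₁² + x₂² = 1, x₃ = ⋯ = x_d = 0}, i.e. ξ = (cos Θ, sin Θ, 0, …, 0) with Θ uniform on [0, 2π). For n ∈ ℕ set Y_n := (1 + 1/n)·ξ. Then d_C(Y_n, ξ) = 1 for all n ∈ ℕ, while d_K(Y_n, ξ) → 0 as n → ∞. In particular, for d ≥ 2 the convex distance d_C and the multivariate Kolmogorov distance d_K are not equivalent metrics. -/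
open MeasureTheory Filter Real

/-- The convex distance between (the laws of) two random vectors in `ℝ^d`:
the supremum of `|P(ξ ∈ A) − P(ζ ∈ A)|` over convex Borel sets `A`. -/
noncomputable def convexDist {d : ℕ} {Ω : Type*} [MeasurableSpace Ω]
    (μ : Measure Ω) (ξ ζ : Ω → EuclideanSpace ℝ (Fin d)) : ℝ :=
  ⨆ A : {A : Set (EuclideanSpace ℝ (Fin d)) // MeasurableSet A ∧ Convex ℝ A},
    |(μ (ξ ⁻¹' A.1)).toReal - (μ (ζ ⁻¹' A.1)).toReal|

/-- The multivariate Kolmogorov distance between (the laws of) two random vectors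
in `ℝ^d`: the supremum of `|P(ξ ∈ A) − P(ζ ∈ A)|` over hyper-rays
`A = (−∞,x₁] × ⋯ × (−∞,x_d]`. -/
noncomputable def kolDistVec {d : ℕ} {Ω : Type*} [MeasurableSpace Ω]
    (μ : Measure Ω) (ξ ζ : Ω → EuclideanSpace ℝ (Fin d)) : ℝ :=
  ⨆ x : Fin d → ℝ,
    |(μ {ω | ∀ i, ξ ω i ≤ x i}).toReal - (μ {ω | ∀ i, ζ ω i ≤ x i}).toReal|

/-- The concentration function of a bounded real random variable without atoms tends to zero. -/
theorem exists_pos_forall_measureReal_abs_sub_le_lt {Ω : Type*} [MeasurableSpace Ω]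
    (μ : Measure Ω) [IsFiniteMeasure μ] {X : Ω → ℝ} (hX : Measurable X) {K : Set ℝ}
    (hK : IsCompact K) (hXK : ∀ ω, X ω ∈ K) (hatom : ∀ t, μ (X ⁻¹' {t}) = 0)
    {ε : ℝ} (hε : 0 < ε) :
    ∃ δ > 0, ∀ t, μ.real {ω | |X ω - t| ≤ δ} < ε := by
  have hU : ∀ t : ℝ, ∃ U, U ⊇ {t} ∧ IsOpen U ∧ (μ.map X) U < ENNReal.ofReal ε := fun t =>
    Set.exists_isOpen_lt_of_lt _ _ (by
      rw [Measure.map_apply hX (measurableSet_singleton t), hatom]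
      exact ENNReal.ofReal_pos.2 hε)
  choose U hsub hopen hlt using hU
  obtain ⟨δ, hδ, hball⟩ := lebesgue_number_lemma_of_metric hK hopen
    (fun t _ => Set.mem_iUnion.2 ⟨t, hsub t rfl⟩)
  refine ⟨δ / 3, by positivity, fun t => ?_⟩
  by_cases hne : ∃ ω, |X ω - t| ≤ δ / 3
  · obtain ⟨ω₀, hω₀⟩ := hne
    obtain ⟨s, hs⟩ := hball (X ω₀) (hXK ω₀)
    refine (ENNReal.toReal_lt_toReal (measure_ne_top _ _) ENNReal.ofReal_ne_top).2
      (lt_of_le_of_lt ?_ (hlt s)) |>.trans_eq (ENNReal.toReal_ofReal hε.le)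
    rw [Measure.map_apply hX (hopen s).measurableSet]
    refine measure_mono fun ω (hω : |X ω - t| ≤ δ / 3) => hs ?_
    rw [Metric.mem_ball, Real.dist_eq]
    rw [abs_le] at hω hω₀
    rw [abs_lt]
    constructor <;> linarith
  · have hempty : {ω | |X ω - t| ≤ δ / 3} = ∅ :=
      Set.eq_empty_of_forall_notMem fun ω hω => hne ⟨ω, hω⟩
    simpa [hempty] using hε

theorem countable_setOf_cos_eq (t : ℝ) : {x : ℝ | cos x = t}.Countable := by
  by_cases h : ∃ y, cos y = t
  · obtain ⟨y, rfl⟩ := h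
    refine ((Set.countable_range fun k : ℤ => 2 * k * π + y).union
      (Set.countable_range fun k : ℤ => 2 * k * π - y)).mono fun x hx => ?_
    obtain ⟨k, hk | hk⟩ := Real.cos_eq_cos_iff.1 (Eq.symm hx)
    · exact Or.inl ⟨k, hk.symm⟩
    · exact Or.inr ⟨k, hk.symm⟩
  · exact Set.countable_empty.mono fun x hx => h ⟨x, hx⟩

theorem countable_setOf_sin_eq (t : ℝ) : {x : ℝ | sin x = t}.Countable := by
  have h := (countable_setOf_cos_eq t).preimage (f := fun x : ℝ => π / 2 - x)
    (fun x y hxy => by simpa using hxy)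
  simpa [Set.preimage, Real.cos_pi_div_two_sub] using h

theorem convexDist_eq_one_of_convex_separated {d : ℕ} {Ω : Type*} [MeasurableSpace Ω]
    (μ : Measure Ω) [IsProbabilityMeasure μ] {ξ ζ : Ω → EuclideanSpace ℝ (Fin d)}
    {A : Set (EuclideanSpace ℝ (Fin d))} (hA : MeasurableSet A) (hconv : Convex ℝ A)
    (hξ : ∀ ω, ξ ω ∉ A) (hζ : ∀ ω, ζ ω ∈ A) : convexDist μ ξ ζ = 1 := by
  have hle : ∀ B : {A : Set (EuclideanSpace ℝ (Fin d)) // MeasurableSet A ∧ Convex ℝ A},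
      |(μ (ξ ⁻¹' B.1)).toReal - (μ (ζ ⁻¹' B.1)).toReal| ≤ 1 := fun B => by
    have h₁ : (μ (ξ ⁻¹' B.1)).toReal ≤ 1 := measureReal_le_one
    have h₂ : (μ (ζ ⁻¹' B.1)).toReal ≤ 1 := measureReal_le_one
    have h₃ : 0 ≤ (μ (ξ ⁻¹' B.1)).toReal := ENNReal.toReal_nonneg
    have h₄ : 0 ≤ (μ (ζ ⁻¹' B.1)).toReal := ENNReal.toReal_nonneg
    rw [abs_le]
    constructor <;> linarith
  have : Nonempty {A : Set (EuclideanSpace ℝ (Fin d)) // MeasurableSet A ∧ Convex ℝ A} :=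
    ⟨⟨A, hA, hconv⟩⟩
  refine le_antisymm (ciSup_le hle) ?_
  refine le_ciSup_of_le ⟨1, Set.forall_mem_range.2 hle⟩ ⟨A, hA, hconv⟩ ?_
  have h₁ : ξ ⁻¹' A = ∅ := Set.eq_empty_of_forall_notMem hξ
  have h₂ : ζ ⁻¹' A = Set.univ := Set.eq_univ_of_forall hζ
  simp [h₁, h₂]

/-- Two hyper-ray events differ only where some coordinate is close to its threshold. -/
theorem setOf_forall_le_subset_union {Ω ι : Type*} {f g : Ω → ι → ℝ} {i j : ι} {δ : ℝ}
    (hi : ∀ ω, |f ω i - g ω i| ≤ δ) (hj : ∀ ω, |f ω j - g ω j| ≤ δ)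
    (hother : ∀ ω k, k ≠ i → k ≠ j → f ω k = g ω k) (x : ι → ℝ) :
    {ω | ∀ k, f ω k ≤ x k} ⊆ {ω | ∀ k, g ω k ≤ x k} ∪
      ({ω | |g ω i - x i| ≤ δ} ∪ {ω | |g ω j - x j| ≤ δ}) := by
  intro ω hω
  by_contra hcon
  simp only [Set.mem_union, Set.mem_ofPred_eq, not_or] at hcon hω
  obtain ⟨hg, hgi, hgj⟩ := hcon
  refine hg fun k => ?_
  have key : ∀ l, |f ω l - g ω l| ≤ δ → ¬ |g ω l - x l| ≤ δ → g ω l ≤ x l := by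
    intro l h₁ h₂
    by_contra! h₃
    rw [abs_le] at h₁
    exact h₂ (abs_le.2 ⟨by linarith, by linarith [hω l]⟩)
  by_cases hki : k = i
  · subst hki; exact key k (hi ω) hgi
  by_cases hkj : k = j
  · subst hkj; exact key k (hj ω) hgj
  exact hother ω k hki hkj ▸ hω k

/-- Let `d ≥ 2` and let `ξ = (cos Θ, sin Θ, 0, …, 0)` with `Θ`
uniform on `[0,2π)`, i.e. `ξ` is uniform on the unit circle in `ℝ^d`. With
`Y_n := (1 + 1/n)·ξ`, the convex distance satisfies `d_C(Y_n, ξ) = 1` for all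
`n ≥ 1`, while the multivariate Kolmogorov distance satisfies `d_K(Y_n, ξ) → 0`.
In particular, `d_C` and `d_K` are not equivalent for `d ≥ 2`. -/
theorem convexDist_one_kolDist_tendsto_zero
    {Ω : Type*} [MeasurableSpace Ω] (μ : Measure Ω) [IsProbabilityMeasure μ]
    (d : ℕ) (hd : 2 ≤ d)
    (Θ : Ω → ℝ) (hΘ_meas : Measurable Θ)
    (hΘ_law : μ.map Θ
      = (ENNReal.ofReal (2 * π))⁻¹ • volume.restrict (Set.Ico 0 (2 * π)))
    (ξ : Ω → EuclideanSpace ℝ (Fin d))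
    (hξ : ∀ ω i, ξ ω i
      = if (i : ℕ) = 0 then Real.cos (Θ ω)
        else if (i : ℕ) = 1 then Real.sin (Θ ω) else 0)
    (Y : ℕ → Ω → EuclideanSpace ℝ (Fin d))
    (hY : ∀ n ω, Y n ω = (1 + 1 / (n : ℝ)) • ξ ω) :
    (∀ n : ℕ, 1 ≤ n → convexDist μ (Y n) ξ = 1) ∧
      Tendsto (fun n => kolDistVec μ (Y n) ξ) atTop (nhds 0) := by
  have hcoord₀ : ∀ ω, ξ ω ⟨0, by omega⟩ = cos (Θ ω) := fun ω => by simp [hξ]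
  have hcoord₁ : ∀ ω, ξ ω ⟨1, by omega⟩ = sin (Θ ω) := fun ω => by simp [hξ]
  have hnorm : ∀ ω, ‖ξ ω‖ = 1 := fun ω => by
    obtain ⟨e, rfl⟩ : ∃ e, d = e + 2 := ⟨d - 2, by omega⟩
    rw [EuclideanSpace.norm_eq, Fin.sum_univ_succ, Fin.sum_univ_succ]
    simp [hξ]
  refine ⟨fun n hn => ?_, ?_⟩
  · refine convexDist_eq_one_of_convex_separated μ
      (measurableSet_closedBall (x := 0) (ε := 1)) (convex_closedBall 0 1) (fun ω => ?_)
      (fun ω => by simp [hnorm])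
    have hpos : (0 : ℝ) < 1 / n := by positivity
    rw [mem_closedBall_zero_iff, hY, norm_smul, hnorm, mul_one, Real.norm_eq_abs,
      abs_of_pos (by linarith)]
    linarith
  have hnull : ∀ f : ℝ → ℝ, Measurable f → (∀ t, {x | f x = t}.Countable) →
      ∀ t, μ ((fun ω => f (Θ ω)) ⁻¹' {t}) = 0 := fun f hf hcount t => by
    have h : μ.map Θ (f ⁻¹' {t}) = 0 := by
      rw [hΘ_law, Measure.smul_apply, Set.Countable.measure_zero (s := f ⁻¹' {t}) (hcount t), smul_zero]
    rwa [Measure.map_apply hΘ_meas (hf (measurableSet_singleton t))] at h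
  rw [Metric.tendsto_atTop]
  intro ε hε
  obtain ⟨δ₀, hδ₀, hcos⟩ := exists_pos_forall_measureReal_abs_sub_le_lt μ
    (Real.measurable_cos.comp hΘ_meas) isCompact_Icc (fun ω => Real.cos_mem_Icc (Θ ω))
    (hnull cos Real.measurable_cos countable_setOf_cos_eq) (show 0 < ε / 4 by positivity)
  obtain ⟨δ₁, hδ₁, hsin⟩ := exists_pos_forall_measureReal_abs_sub_le_lt μ
    (Real.measurable_sin.comp hΘ_meas) isCompact_Icc (fun ω => Real.sin_mem_Icc (Θ ω))
    (hnull sin Real.measurable_sin countable_setOf_sin_eq) (show 0 < ε / 4 by positivity)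
  obtain ⟨N, hN⟩ := exists_nat_gt (2 / min δ₀ δ₁)
  refine ⟨N, fun n hn => ?_⟩
  have hδ : 0 < min δ₀ δ₁ := lt_min hδ₀ hδ₁
  have hnN : 2 / min δ₀ δ₁ < (n : ℝ) := hN.trans_le (by exact_mod_cast hn)
  have hn0 : (0 : ℝ) < n := lt_trans (by positivity) hnN
  have hsmall : 2 * (1 / (n : ℝ)) < min δ₀ δ₁ := by
    rw [div_lt_iff₀ hδ] at hnN
    rw [mul_one_div, div_lt_iff₀ hn0]
    linarith
  set r : ℝ := 1 / (n : ℝ) with hr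
  have hr0 : 0 < r := by positivity
  have hYapp : ∀ ω i, Y n ω i = (1 + r) * ξ ω i := fun ω i => by simp [hY, hr]
  have hdist : ∀ ω i, |ξ ω i| ≤ 1 → |Y n ω i - ξ ω i| ≤ r := fun ω i h => by
    rw [hYapp, show (1 + r) * ξ ω i - ξ ω i = r * ξ ω i by ring, abs_mul, abs_of_pos hr0]
    exact mul_le_of_le_one_right hr0.le h
  have hd₀ : ∀ ω, |Y n ω ⟨0, by omega⟩ - ξ ω ⟨0, by omega⟩| ≤ r := fun ω =>
    hdist ω _ (by rw [hcoord₀]; exact Real.abs_cos_le_one _)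
  have hd₁ : ∀ ω, |Y n ω ⟨1, by omega⟩ - ξ ω ⟨1, by omega⟩| ≤ r := fun ω =>
    hdist ω _ (by rw [hcoord₁]; exact Real.abs_sin_le_one _)
  have hother : ∀ ω k, k ≠ ⟨0, by omega⟩ → k ≠ ⟨1, by omega⟩ → Y n ω k = ξ ω k :=
    fun ω k h₀ h₁ => by
      have h : ξ ω k = 0 := by
        rw [hξ, if_neg (fun h => h₀ (Fin.ext h)), if_neg (fun h => h₁ (Fin.ext h))]
      rw [hYapp, h, mul_zero]
  have hbound : ∀ Z W : Ω → EuclideanSpace ℝ (Fin d),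
      (∀ ω, |Z ω ⟨0, by omega⟩ - W ω ⟨0, by omega⟩| ≤ r) →
      (∀ ω, |Z ω ⟨1, by omega⟩ - W ω ⟨1, by omega⟩| ≤ r) →
      (∀ ω k, k ≠ ⟨0, by omega⟩ → k ≠ ⟨1, by omega⟩ → Z ω k = W ω k) →
      (∀ ω, |W ω ⟨0, by omega⟩ - ξ ω ⟨0, by omega⟩| ≤ r) →
      (∀ ω, |W ω ⟨1, by omega⟩ - ξ ω ⟨1, by omega⟩| ≤ r) → ∀ x : Fin d → ℝ,
      μ.real {ω | ∀ i, Z ω i ≤ x i} ≤ μ.real {ω | ∀ i, W ω i ≤ x i} + ε / 2 := by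
    intro Z W h₀ h₁ hZW hW₀ hW₁ x
    have hsub := setOf_forall_le_subset_union (f := fun ω => Z ω) (g := fun ω => W ω)
      h₀ h₁ hZW x
    have hsub₀ : {ω | |W ω ⟨0, by omega⟩ - x ⟨0, by omega⟩| ≤ r} ⊆
        {ω | |cos (Θ ω) - x ⟨0, by omega⟩| ≤ δ₀} := fun ω hω => by
      have hWω := hW₀ ω
      rw [hcoord₀] at hWω
      simp only [Set.mem_ofPred_eq, abs_le] at hω hWω ⊢
      have := min_le_left δ₀ δ₁
      constructor <;> linarith
    have hsub₁ : {ω | |W ω ⟨1, by omega⟩ - x ⟨1, by omega⟩| ≤ r} ⊆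
        {ω | |sin (Θ ω) - x ⟨1, by omega⟩| ≤ δ₁} := fun ω hω => by
      have hWω := hW₁ ω
      rw [hcoord₁] at hWω
      simp only [Set.mem_ofPred_eq, abs_le] at hω hWω ⊢
      have := min_le_right δ₀ δ₁
      constructor <;> linarith
    have hmono := measureReal_mono (μ := μ)
      (hsub.trans (Set.union_subset_union_right _ (Set.union_subset_union hsub₀ hsub₁)))
    have hunion := hmono.trans ((measureReal_union_le _ _).trans
      (add_le_add_right (measureReal_union_le _ _) _))
    have hc := hcos (x ⟨0, by omega⟩)
    have hs := hsin (x ⟨1, by omega⟩)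
    simp only [Function.comp_apply] at hc hs
    linarith
  have hle : kolDistVec μ (Y n) ξ ≤ ε / 2 := by
    refine ciSup_le fun x => ?_
    have h₁ := hbound (Y n) ξ hd₀ hd₁ hother (by simp [hr0.le]) (by simp [hr0.le]) x
    have h₂ := hbound ξ (Y n) (fun ω => abs_sub_comm (Y n ω _) _ ▸ hd₀ ω)
      (fun ω => abs_sub_comm (Y n ω _) _ ▸ hd₁ ω)
      (fun ω k h h' => (hother ω k h h').symm) hd₀ hd₁ x
    simp only [measureReal_def] at h₁ h₂
    rw [abs_le]
    constructor <;> linarith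
  have hnonneg : 0 ≤ kolDistVec μ (Y n) ξ := Real.iSup_nonneg fun x => abs_nonneg _
  rw [Real.dist_eq, sub_zero, abs_of_nonneg hnonneg]
  linarith
end
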